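/- For each i ∈ {1,2,3,4}, the extension of the ideal 𝒟 = (f₁, f₂, J_{1,2}, J_{1,3}, J_{1,4}, J_{2,3}, J_{2,4}, J_{3,4}) to the localization C_{x_i} coincides with the extension of the ideal generated by f₁, f₂ and the three minors J_{r,s} with r < s and r, s ∈ {1,2,3,4}\{i}. -/

import Mathlib

set_option maxSynthPendingDepth 3

open MvPolynomial

/-- Index type for the coefficient indeterminates `U_{i,α}`, `i ∈ {1,2}`,
`α` an exponent vector in four variables with `|α| = d i`. -/
def CoefIdx (d : Fin 2 → ℕ) : Type :=
  Σ i : Fin 2, {α : Fin 4 →₀ ℕ // (α.sum fun _ e => e) = d i}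

/-- The universal ring of coefficients `A = k[U_{i,α}]`. -/
abbrev Aring (k : Type*) [CommRing k] (d : Fin 2 → ℕ) : Type _ :=
  MvPolynomial (CoefIdx d) k

/-- The polynomial ring `C = A[x₁,x₂,x₃,x₄]`. -/
abbrev Cring (k : Type*) [CommRing k] (d : Fin 2 → ℕ) : Type _ :=
  MvPolynomial (Fin 4) (Aring k d)

/-- The generic homogeneous polynomial `f_i = Σ_{|α| = d i} U_{i,α} x^α` of degree `d i`. -/
noncomputable def genF (k : Type*) [CommRing k] (d : Fin 2 → ℕ) (i : Fin 2) : Cring k d :=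
  ∑ α ∈ (Finset.finsuppAntidiag (Finset.univ : Finset (Fin 4)) (d i)).attach,
    monomial α.1 (X (⟨i, ⟨α.1, (Finset.mem_finsuppAntidiag'.mp α.2).1⟩⟩ : CoefIdx d))

/-- The 2-minors `J_{r,s} = ∂ᵣf₁·∂ₛf₂ − ∂ₛf₁·∂ᵣf₂` of the Jacobian matrix of `(f₁,f₂)`. -/
noncomputable def Jmin (k : Type*) [CommRing k] (d : Fin 2 → ℕ) (r s : Fin 4) : Cring k d :=
  pderiv r (genF k d 0) * pderiv s (genF k d 1) -
    pderiv s (genF k d 0) * pderiv r (genF k d 1)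

/-- The ideal `𝒟 = (f₁, f₂) + (J_{r,s} : r < s) ⊂ C`. -/
noncomputable def Dideal (k : Type*) [CommRing k] (d : Fin 2 → ℕ) : Ideal (Cring k d) :=
  Ideal.span ({genF k d 0, genF k d 1} ∪ {p | ∃ r s : Fin 4, r < s ∧ p = Jmin k d r s})

/-! Modulo `(f₁, …, fₚ)`, Euler's identity says that the Jacobian matrix kills the vector of
variables. Expanding a maximal minor in which column `i` occurs along that relation writes
`xᵢ` times this minor as a combination of minors avoiding column `i`; once `xᵢ` is a unit, the
minors through column `i` are redundant. -/

section MaximalMinors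

open scoped Matrix

lemma submatrix_update_eq_updateCol {m n R : Type*} [DecidableEq m] (A : Matrix m n R)
    (c : m → n) (a : m) (r : n) :
    A.submatrix id (Function.update c a r) = (A.submatrix id c).updateCol a (A.col r) := by
  ext j b
  obtain rfl | hb := eq_or_ne b a <;> simp [*]

variable {m n R : Type*} [CommRing R]

section DetColumns

variable [Fintype m] [DecidableEq m]

lemma det_updateCol_mulVec [Fintype n] (M : Matrix m m R) (a : m) (A : Matrix m n R) (x : n → R) :
    (M.updateCol a (A *ᵥ x)).det = ∑ r, x r * (M.updateCol a (A.col r)).det := by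
  simp only [← Matrix.cramer_apply, Matrix.mulVec_eq_sum, op_smul_eq_smul, map_sum, map_smul,
    Finset.sum_apply, Pi.smul_apply, smul_eq_mul]
  rfl

lemma det_updateCol_mem {I : Ideal R} (M : Matrix m m R) (a : m) {b : m → R} (hb : ∀ j, b j ∈ I) :
    (M.updateCol a b).det ∈ I := by
  rw [← Matrix.cramer_apply, Matrix.cramer_eq_adjugate_mulVec]
  exact sum_mem fun j _ => I.mul_mem_left _ (hb j)

lemma det_submatrix_eq_zero_of_not_injective (A : Matrix m n R) {c : m → n}
    (hc : ¬ Function.Injective c) : (A.submatrix id c).det = 0 := by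
  obtain ⟨a, b, hab, hne⟩ := Function.not_injective_iff.mp hc
  exact Matrix.det_zero_of_column_eq hne fun j => congrArg (A j) hab

lemma mul_det_submatrix_mem [Fintype n] {I : Ideal R} {A : Matrix m n R} {x : n → R}
    {i : n} (hAx : ∀ j, (A *ᵥ x) j ∈ I)
    (hI : ∀ c : m → n, (∀ a, c a ≠ i) → (A.submatrix id c).det ∈ I) (c : m → n) :
    x i * (A.submatrix id c).det ∈ I := by
  classical
  by_cases hinj : Function.Injective c
  swap
  · simp only [det_submatrix_eq_zero_of_not_injective A hinj, mul_zero, zero_mem]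
  by_cases hi : ∀ a, c a ≠ i
  · exact I.mul_mem_left _ (hI c hi)
  push Not at hi
  obtain ⟨a, rfl⟩ := hi
  have hsum : ∑ r, x r * (A.submatrix id (Function.update c a r)).det ∈ I := by
    simp only [submatrix_update_eq_updateCol, ← det_updateCol_mulVec]
    exact det_updateCol_mem _ a hAx
  have hrest : ∑ r ∈ Finset.univ.erase (c a),
      x r * (A.submatrix id (Function.update c a r)).det ∈ I := by
    refine sum_mem fun r hr => I.mul_mem_left _ (hI _ fun b => ?_)
    obtain rfl | hb := eq_or_ne b a
    · simpa using Finset.ne_of_mem_erase hr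
    · simpa [hb] using hinj.ne hb
  rw [← Finset.add_sum_erase _ _ (Finset.mem_univ (c a)), Function.update_eq_self] at hsum
  exact (I.add_mem_iff_left hrest).mp hsum

end DetColumns

variable {p : ℕ} [LinearOrder n]

/-- The maximal minors of a `p × n` matrix with columns in `s`, each set of columns being listed in
increasing order. -/
def maximalMinors (A : Matrix (Fin p) n R) (s : Set n) : Set R :=
  {q | ∃ c : Fin p → n, StrictMono c ∧ (∀ a, c a ∈ s) ∧ q = (A.submatrix id c).det}

lemma maximalMinors_mono (A : Matrix (Fin p) n R) {s t : Set n} (hst : s ⊆ t) :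
    maximalMinors A s ⊆ maximalMinors A t := by
  rintro _ ⟨c, hc, hcs, rfl⟩
  exact ⟨c, hc, fun a => hst (hcs a), rfl⟩

lemma det_submatrix_mem_of_maximalMinors_subset {I : Ideal R} {A : Matrix (Fin p) n R} {s : Set n}
    (hI : maximalMinors A s ⊆ I) {c : Fin p → n} (hc : ∀ a, c a ∈ s) :
    (A.submatrix id c).det ∈ I := by
  by_cases hinj : Function.Injective c
  swap
  · simp only [det_submatrix_eq_zero_of_not_injective A hinj, zero_mem]
  have hmono : StrictMono (c ∘ Tuple.sort c) :=
    (Tuple.monotone_sort c).strictMono_of_injective (hinj.comp (Tuple.sort c).injective)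
  have hsort : ((A.submatrix id c).submatrix id (Tuple.sort c)).det ∈ I :=
    hI ⟨_, hmono, fun a => hc _, rfl⟩
  rw [Matrix.det_permute'] at hsort
  exact (I.unit_mul_mem_iff_mem ((Equiv.Perm.sign _).isUnit.map (Int.castRingHom R))).mp hsort

lemma maximalMinors_fin_two (A : Matrix (Fin 2) n R) (s : Set n) :
    maximalMinors A s =
      {q | ∃ r t, r < t ∧ r ∈ s ∧ t ∈ s ∧ q = A 0 r * A 1 t - A 0 t * A 1 r} := by
  ext q
  simp [maximalMinors, Fin.exists_fin_succ_pi, Fin.strictMono_iff_lt_succ, Matrix.det_fin_two,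
    Fin.forall_fin_two, and_assoc]

end MaximalMinors

section Jacobian

open scoped Matrix

variable {ι σ R : Type*} [CommRing R]

/-- The Jacobian matrix `(∂ᵣ fⱼ)` of a family of polynomials, with one row for each polynomial. -/
noncomputable def jacobianMatrix (f : ι → MvPolynomial σ R) : Matrix ι σ (MvPolynomial σ R) :=
  Matrix.of fun j r => pderiv r (f j)

lemma jacobianMatrix_mulVec_X [Fintype σ] {f : ι → MvPolynomial σ R} {d : ι → ℕ}
    (hf : ∀ j, (f j).IsHomogeneous (d j)) (j : ι) : (jacobianMatrix f *ᵥ X) j = d j • f j := by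
  simp only [← (hf j).sum_X_mul_pderiv, Matrix.mulVec, dotProduct, jacobianMatrix, Matrix.of_apply,
    mul_comm]

variable {p : ℕ} [LinearOrder σ]

/-- The ideal generated by `f₁, …, fₚ` and the maximal minors of their Jacobian matrix with columns
in `s`; `s = Set.univ` gives the ideal `𝒟` when `p = 2`. -/
noncomputable def jacobianIdeal (f : Fin p → MvPolynomial σ R) (s : Set σ) :
    Ideal (MvPolynomial σ R) :=
  Ideal.span (Set.range f ∪ maximalMinors (jacobianMatrix f) s)

lemma jacobianIdeal_mono (f : Fin p → MvPolynomial σ R) {s t : Set σ} (hst : s ⊆ t) :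
    jacobianIdeal f s ≤ jacobianIdeal f t :=
  Ideal.span_mono (Set.union_subset_union_right _ (maximalMinors_mono _ hst))

lemma X_mul_mem_jacobianIdeal_compl [Finite σ] {f : Fin p → MvPolynomial σ R} {d : Fin p → ℕ}
    (hf : ∀ j, (f j).IsHomogeneous (d j)) (i : σ) {q : MvPolynomial σ R}
    (hq : q ∈ jacobianIdeal f Set.univ) : X i * q ∈ jacobianIdeal f {i}ᶜ := by
  cases nonempty_fintype σ
  have hfI (j : Fin p) : f j ∈ jacobianIdeal f {i}ᶜ := Ideal.subset_span (.inl ⟨j, rfl⟩)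
  have hminors (c : Fin p → σ) (hc : ∀ a, c a ≠ i) :
      ((jacobianMatrix f).submatrix id c).det ∈ jacobianIdeal f {i}ᶜ :=
    det_submatrix_mem_of_maximalMinors_subset
      (Set.subset_union_right.trans Ideal.subset_span) hc
  have hEuler (j : Fin p) : (jacobianMatrix f *ᵥ X) j ∈ jacobianIdeal f {i}ᶜ := by
    rw [jacobianMatrix_mulVec_X hf]
    exact nsmul_mem (hfI j) _
  induction hq using Submodule.span_induction with
  | mem q hq =>
    obtain ⟨j, rfl⟩ | ⟨c, -, -, rfl⟩ := hq
    · exact Ideal.mul_mem_left _ _ (hfI j)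
    · exact mul_det_submatrix_mem hEuler hminors c
  | zero => simp only [mul_zero, zero_mem]
  | add q r _ _ hXq hXr => simpa only [mul_add] using add_mem hXq hXr
  | smul a q _ hXq => simpa only [smul_eq_mul, mul_left_comm] using Ideal.mul_mem_left _ a hXq

theorem Dideal_localization_eq_general [Finite σ] {f : Fin p → MvPolynomial σ R} {d : Fin p → ℕ}
    (hf : ∀ j, (f j).IsHomogeneous (d j)) {S : Type*} [CommRing S] (φ : MvPolynomial σ R →+* S)
    {i : σ} (hφ : IsUnit (φ (X i))) :
    (jacobianIdeal f Set.univ).map φ = (jacobianIdeal f {i}ᶜ).map φ := by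
  refine le_antisymm (Ideal.map_le_iff_le_comap.mpr fun q hq => ?_)
    (Ideal.map_mono (jacobianIdeal_mono f (Set.subset_univ _)))
  rw [Ideal.mem_comap, ← Ideal.unit_mul_mem_iff_mem _ hφ, ← map_mul]
  exact Ideal.mem_map_of_mem φ (X_mul_mem_jacobianIdeal_compl hf i hq)

end Jacobian

section GenericPair

variable (k : Type*) [CommRing k] (d : Fin 2 → ℕ)

lemma genF_isHomogeneous (j : Fin 2) : (genF k d j).IsHomogeneous (d j) :=
  IsHomogeneous.sum _ _ _ fun α _ =>
    isHomogeneous_monomial _ (Finset.mem_finsuppAntidiag'.mp α.2).1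

lemma jacobianIdeal_genF (s : Set (Fin 4)) :
    jacobianIdeal (genF k d) s = Ideal.span ({genF k d 0, genF k d 1} ∪
      {q | ∃ r t : Fin 4, r < t ∧ r ∈ s ∧ t ∈ s ∧ q = Jmin k d r t}) := by
  have hrange : Set.range (genF k d) = {genF k d 0, genF k d 1} := by
    ext q
    simp [Fin.exists_fin_two, eq_comm]
  rw [jacobianIdeal, maximalMinors_fin_two, hrange]
  rfl

lemma Dideal_eq_jacobianIdeal : Dideal k d = jacobianIdeal (genF k d) Set.univ := by
  simp only [jacobianIdeal_genF, Dideal, Set.mem_univ, true_and]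

end GenericPair

/-- **Lemma.** For each `i`, the extension of
`𝒟 = (f₁, f₂, J_{r,s} : r < s)` to the localization `C_{x_i}` coincides with the extension
of the ideal generated by `f₁, f₂` and the three minors `J_{r,s}` with `r < s`,
`r ≠ i`, `s ≠ i`. -/
theorem Dideal_localization_eq (k : Type*) [CommRing k] (d : Fin 2 → ℕ)
    (hd : ∀ i, 0 < d i) (i : Fin 4) :
    (Dideal k d).map
        (algebraMap (Cring k d) (Localization.Away (X i : Cring k d)))
      = (Ideal.span ({genF k d 0, genF k d 1} ∪
          {p | ∃ r s : Fin 4, r < s ∧ r ≠ i ∧ s ≠ i ∧ p = Jmin k d r s})).map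
        (algebraMap (Cring k d) (Localization.Away (X i : Cring k d))) := by
  rw [Dideal_eq_jacobianIdeal]
  exact (Dideal_localization_eq_general (genF_isHomogeneous k d) _
    (IsLocalization.Away.algebraMap_isUnit (X i))).trans
      (congrArg (Ideal.map _) (jacobianIdeal_genF k d {i}ᶜ))
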